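/- arXiv:2306.11824 — 2 statements merged into one kernel-verified Lean document; each statement's English description precedes it below -/
import Mathlib

section
/- Let H ∈ (0, 1/2), T > 0, and let ξ : [0,T] → ℝ be measurable and bounded. Set c₁ := 1/(2H Γ(3/2 − H) Γ(H + 1/2)), and define η(t) := ∫₀^t s^{1/2−H} ξ(s) ds and μ(t) := c₁ ∫₀^t (t − s)^{1/2−H} s^{1/2−H} ξ(s) ds for t ∈ [0,T]. Then the function m(t) := c₁ (1/2 − H) ∫₀^t (t − s)^{−H−1/2} s^{1/2−H} ξ(s) ds is well defined and bounded on [0,T], μ is absolutely continuous with μ(t) = ∫₀^t m(s) ds for all t ∈ [0,T], and η(t) = 2H ∫₀^t (t − s)^{H−1/2} m(s) ds for all t ∈ [0,T]. -/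
open MeasureTheory Real

/-- The constant `c₁ = 1 / (2H Γ(3/2 − H) Γ(H + 1/2))`. -/
noncomputable def c₁ (H : ℝ) : ℝ :=
  1 / (2 * H * Real.Gamma (3 / 2 - H) * Real.Gamma (H + 1 / 2))

/-- `η(t) = ∫₀^t s^(1/2−H) ξ(s) ds`. -/
noncomputable def η (H : ℝ) (ξ : ℝ → ℝ) (t : ℝ) : ℝ :=
  ∫ s in Set.Ioc (0 : ℝ) t, s ^ (1 / 2 - H) * ξ s

/-- `μ(t) = c₁ ∫₀^t (t−s)^(1/2−H) s^(1/2−H) ξ(s) ds`. -/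
noncomputable def μfn (H : ℝ) (ξ : ℝ → ℝ) (t : ℝ) : ℝ :=
  c₁ H * ∫ s in Set.Ioc (0 : ℝ) t, (t - s) ^ (1 / 2 - H) * s ^ (1 / 2 - H) * ξ s

/-- `m(t) = c₁ (1/2 − H) ∫₀^t (t−s)^(−H−1/2) s^(1/2−H) ξ(s) ds`. -/
noncomputable def mfn (H : ℝ) (ξ : ℝ → ℝ) (t : ℝ) : ℝ :=
  c₁ H * (1 / 2 - H) * ∫ s in Set.Ioc (0 : ℝ) t, (t - s) ^ (-H - 1 / 2) * s ^ (1 / 2 - H) * ξ s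

/-! Put `g s = s ^ (1/2 - H) * ξ s` and let `I^α` be the Riemann–Liouville fractional integral of
order `α` based at `0`. By the Gamma recurrence `m = c₁ Γ(3/2 - H) I^(1/2 - H) g` and
`μ = c₁ Γ(3/2 - H) I^(3/2 - H) g`, while `η = I^1 g`. The semigroup law `I^β I^α = I^(α + β)`,
which is Fubini on a triangle together with Euler's Beta integral, turns `I^1 m` into `μ` and
`I^(H + 1/2) m` into a multiple of `η`; the constant `c₁` is the one for which
`2 H Γ(H + 1/2) I^(H + 1/2) m` is exactly `η`. -/

section TriangleFubini

open Set

variable {E : Type*} [NormedAddCommGroup E] {a t : ℝ} {F : ℝ × ℝ → E} {μ ν : Measure ℝ}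

/-- The triangle `a < s ≤ u ≤ t` of pairs `(s, u)`, the domain of an iterated Volterra integral.
It is closed along the diagonal so that its section at `u` is exactly `Ioc a u`. -/
def triangle (a t : ℝ) : Set (ℝ × ℝ) := {p | a < p.1 ∧ p.1 ≤ p.2 ∧ p.2 ≤ t}

lemma measurableSet_triangle : MeasurableSet (triangle a t) :=
  (measurableSet_lt measurable_const measurable_fst).inter
    ((measurableSet_le measurable_fst measurable_snd).inter
      (measurableSet_le measurable_snd measurable_const))

lemma triangle_subset_Ioc_prod_univ : triangle a t ⊆ Ioc a t ×ˢ univ :=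
  fun _ ⟨has, hsu, hut⟩ ↦ ⟨⟨has, hsu.trans hut⟩, trivial⟩

lemma indicator_triangle_left (s : ℝ) :
    (fun u ↦ (triangle a t).indicator F (s, u)) =
      (Ioc a t).indicator (fun s ↦ (Icc s t).indicator fun u ↦ F (s, u)) s := by
  ext u
  by_cases hs : s ∈ Ioc a t
  · simp [indicator, triangle, hs, hs.1]
  · rw [indicator_of_notMem hs, indicator_of_notMem fun h ↦ hs ⟨h.1, h.2.1.trans h.2.2⟩]
    rfl

lemma indicator_triangle_right (u : ℝ) :
    (fun s ↦ (triangle a t).indicator F (s, u)) =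
      (Ioc a t).indicator (fun u ↦ (Ioc a u).indicator fun s ↦ F (s, u)) u := by
  ext s
  by_cases hu : u ∈ Ioc a t
  · simp [indicator, triangle, hu, hu.2]
  · rw [indicator_of_notMem hu, indicator_of_notMem fun h ↦ hu ⟨h.1.trans_le h.2.1, h.2.2⟩]
    rfl

lemma integrableOn_triangle_of_integrableOn_Icc [SFinite ν]
    (hF : AEStronglyMeasurable F ((μ.prod ν).restrict (triangle a t)))
    (hFs : ∀ᵐ s ∂μ.restrict (Ioc a t), IntegrableOn (fun u ↦ F (s, u)) (Icc s t) ν)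
    (hFn : IntegrableOn (fun s ↦ ∫ u in Icc s t, ‖F (s, u)‖ ∂ν) (Ioc a t) μ) :
    IntegrableOn F (triangle a t) (μ.prod ν) := by
  rw [← integrable_indicator_iff measurableSet_triangle, integrable_prod_iff
    ((aestronglyMeasurable_indicator_iff measurableSet_triangle).2 hF)]
  refine ⟨?_, (hFn.integrable_indicator measurableSet_Ioc).congr (.of_forall fun s ↦ ?_)⟩
  · filter_upwards [(ae_restrict_iff' measurableSet_Ioc).1 hFs] with s hs
    rw [indicator_triangle_left]
    by_cases h : s ∈ Ioc a t
    · simpa [h] using (hs h).integrable_indicator measurableSet_Icc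
    · simp [h]
  · simp only [norm_indicator_eq_indicator_norm]
    rw [indicator_triangle_left (F := fun p ↦ ‖F p‖)]
    by_cases h : s ∈ Ioc a t
    · simp [h, integral_indicator measurableSet_Icc]
    · simp [h]

lemma setIntegral_triangle_swap [NormedSpace ℝ E] [SFinite μ] [SFinite ν]
    (hF : IntegrableOn F (triangle a t) (μ.prod ν)) :
    ∫ u in Ioc a t, ∫ s in Ioc a u, F (s, u) ∂μ ∂ν =
      ∫ s in Ioc a t, ∫ u in Icc s t, F (s, u) ∂ν ∂μ := by
  have hswap := integral_integral_swap (f := fun s u ↦ (triangle a t).indicator F (s, u))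
    (hF.integrable_indicator measurableSet_triangle)
  simp only [indicator_triangle_left, indicator_triangle_right] at hswap
  rw [← integral_indicator measurableSet_Ioc, ← integral_indicator measurableSet_Ioc]
  convert hswap.symm using 3 with u s
  · by_cases h : u ∈ Ioc a t <;> simp [h, integral_indicator measurableSet_Ioc]
  · by_cases h : s ∈ Ioc a t <;> simp [h, integral_indicator measurableSet_Icc]

end TriangleFubini

section PowerKernel

open Set ProbabilityTheory

variable {E : Type*} [NormedAddCommGroup E] [NormedSpace ℝ E] {α β a t : ℝ}

lemma integrableOn_sub_rpow (hα : 0 < α) :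
    IntegrableOn (fun s ↦ (t - s) ^ (α - 1)) (Ioc a t) := by
  have h := (intervalIntegral.intervalIntegrable_rpow' (a := t - a) (b := t - t)
    (show -1 < α - 1 by linarith)).comp_sub_left t
  simp only [sub_sub_cancel] at h
  exact h.1

lemma integral_sub_rpow (hα : 0 < α) (hat : a ≤ t) :
    ∫ s in Ioc a t, (t - s) ^ (α - 1) = (t - a) ^ α / α := by
  rw [← intervalIntegral.integral_of_le hat,
    intervalIntegral.integral_comp_sub_left (fun x ↦ x ^ (α - 1)) t,
    integral_rpow (.inl (by linarith))]
  simp [hα.ne']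

lemma integral_rpow_mul_sub_rpow {L : ℝ} (hα : 0 < α) (hβ : 0 < β) (hL : 0 < L) :
    ∫ x in (0 : ℝ)..L, x ^ (α - 1) * (L - x) ^ (β - 1) = beta α β * L ^ (α + β - 1) := by
  have hcomplex := Complex.betaIntegral_scaled α β hL
  have hreal : ∫ x in (0 : ℝ)..L, (x : ℂ) ^ (α - 1 : ℂ) * (L - x : ℂ) ^ (β - 1 : ℂ) =
      (∫ x in (0 : ℝ)..L, x ^ (α - 1) * (L - x) ^ (β - 1) : ℝ) := by
    rw [← intervalIntegral.integral_ofReal]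
    refine intervalIntegral.integral_congr fun x hx ↦ ?_
    rw [uIcc_of_le hL.le] at hx
    simp only [Complex.ofReal_mul, Complex.ofReal_cpow hx.1,
      Complex.ofReal_cpow (sub_nonneg.2 hx.2), Complex.ofReal_sub, Complex.ofReal_one]
  rw [hreal, Complex.betaIntegral_eq_Gamma_mul_div _ _ (by simpa) (by simpa)] at hcomplex
  simp only [← Complex.ofReal_add, Complex.Gamma_ofReal, ← Complex.ofReal_one,
    ← Complex.ofReal_sub, ← Complex.ofReal_cpow hL.le] at hcomplex
  rw [beta, mul_comm]
  exact_mod_cast hcomplex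

lemma integral_sub_rpow_mul_sub_rpow (hα : 0 < α) (hβ : 0 < β) (hat : a < t) :
    ∫ u in Ioc a t, (t - u) ^ (β - 1) * (u - a) ^ (α - 1) =
      beta α β * (t - a) ^ (α + β - 1) := by
  have hshift := intervalIntegral.integral_comp_sub_right (a := a) (b := t)
    (fun x ↦ x ^ (α - 1) * (t - a - x) ^ (β - 1)) a
  rw [sub_self, integral_rpow_mul_sub_rpow hα hβ (sub_pos.2 hat)] at hshift
  rw [← hshift, ← intervalIntegral.integral_of_le hat.le]
  simp only [sub_sub_sub_cancel_right, mul_comm]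

lemma integrableOn_sub_rpow_mul_sub_rpow (hα : 0 < α) (hβ : 0 < β) (hat : a < t) :
    IntegrableOn (fun u ↦ (t - u) ^ (β - 1) * (u - a) ^ (α - 1)) (Ioc a t) := by
  refine .of_integral_ne_zero ?_
  rw [integral_sub_rpow_mul_sub_rpow hα hβ hat]
  exact (mul_pos (beta_pos hα hβ) (rpow_pos_of_pos (sub_pos.2 hat) _)).ne'

lemma integrableOn_sub_rpow_smul {f : ℝ → E} (hα : 0 < α)
    (hf : MemLp f ⊤ (volume.restrict (Ioc a t))) :
    IntegrableOn (fun s ↦ (t - s) ^ (α - 1) • f s) (Ioc a t) :=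
  (integrableOn_sub_rpow hα).smul_of_top_left hf

lemma ae_restrict_Ioc_mem_Ioo {μ : Measure ℝ} [NullSingletonClass μ] :
    ∀ᵐ s ∂μ.restrict (Ioc a t), s ∈ Ioo a t := by
  rw [← restrict_Ioo_eq_restrict_Ioc]
  exact ae_restrict_mem measurableSet_Ioo

lemma aestronglyMeasurable_of_sub_rpow_smul {p : ℝ} {f : ℝ → E}
    (hf : AEStronglyMeasurable (fun s ↦ (t - s) ^ p • f s) (volume.restrict (Ioc a t))) :
    AEStronglyMeasurable f (volume.restrict (Ioc a t)) := by
  have hinv : Measurable fun s : ℝ ↦ ((t - s) ^ p)⁻¹ := by fun_prop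
  refine (hinv.aestronglyMeasurable.smul hf).congr ?_
  filter_upwards [ae_restrict_Ioc_mem_Ioo] with s hs
  exact inv_smul_smul₀ (rpow_pos_of_pos (sub_pos.2 hs.2) p).ne' (f s)

lemma integral_norm_sub_rpow_mul_sub_rpow_smul (hα : 0 < α) (hβ : 0 < β) (hat : a < t) (x : E) :
    ∫ u in Icc a t, ‖((t - u) ^ (β - 1) * (u - a) ^ (α - 1)) • x‖ =
      beta α β * ‖(t - a) ^ (α + β - 1) • x‖ := by
  have hnorm : ∀ u ∈ Icc a t, ‖((t - u) ^ (β - 1) * (u - a) ^ (α - 1)) • x‖ =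
      (t - u) ^ (β - 1) * (u - a) ^ (α - 1) * ‖x‖ := fun u hu ↦ by
    have ht := rpow_nonneg (sub_nonneg.2 hu.2) (β - 1)
    have ha := rpow_nonneg (sub_nonneg.2 hu.1) (α - 1)
    rw [norm_smul, Real.norm_of_nonneg (mul_nonneg ht ha)]
  rw [setIntegral_congr_fun measurableSet_Icc hnorm, integral_mul_const,
    integral_Icc_eq_integral_Ioc, integral_sub_rpow_mul_sub_rpow hα hβ hat, norm_smul,
    Real.norm_of_nonneg (rpow_nonneg (sub_nonneg.2 hat.le) _), mul_assoc]

lemma integrableOn_triangle_sub_rpow_mul_sub_rpow_smul {f : ℝ → E} (hα : 0 < α) (hβ : 0 < β)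
    (hf : IntegrableOn (fun s ↦ (t - s) ^ (α + β - 1) • f s) (Ioc a t)) :
    IntegrableOn (fun p : ℝ × ℝ ↦ ((t - p.2) ^ (β - 1) * (p.2 - p.1) ^ (α - 1)) • f p.1)
      (triangle a t) (volume.prod volume) := by
  refine integrableOn_triangle_of_integrableOn_Icc ?_ ?_ ?_
  · have hk : Measurable fun p : ℝ × ℝ ↦ (t - p.2) ^ (β - 1) * (p.2 - p.1) ^ (α - 1) := by
      fun_prop
    have hfst : AEStronglyMeasurable (fun p : ℝ × ℝ ↦ f p.1)
        ((volume.restrict (Ioc a t)).prod (volume.restrict univ)) :=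
      (aestronglyMeasurable_of_sub_rpow_smul hf.aestronglyMeasurable).comp_fst
    rw [Measure.prod_restrict] at hfst
    exact hk.aestronglyMeasurable.smul (hfst.mono_set triangle_subset_Ioc_prod_univ)
  · filter_upwards [ae_restrict_Ioc_mem_Ioo] with s hs
    rw [integrableOn_Icc_iff_integrableOn_Ioc]
    exact (integrableOn_sub_rpow_mul_sub_rpow hα hβ hs.2).smul_const (f s)
  · refine (hf.norm.const_mul (beta α β)).congr ?_
    filter_upwards [ae_restrict_Ioc_mem_Ioo] with s hs
    exact (integral_norm_sub_rpow_mul_sub_rpow_smul hα hβ hs.2 (f s)).symm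

lemma memLp_top_rpow_smul {p : ℝ} {f : ℝ → E} {μ : Measure ℝ} (hp : 0 ≤ p)
    (hf : MemLp f ⊤ (μ.restrict (Ioc 0 t))) :
    MemLp (fun s ↦ s ^ p • f s) ⊤ (μ.restrict (Ioc 0 t)) := by
  have hpow : MemLp (fun s : ℝ ↦ s ^ p) ⊤ (μ.restrict (Ioc 0 t)) := by
    refine memLp_top_of_bound (by fun_prop) (t ^ p) ?_
    filter_upwards [ae_restrict_mem measurableSet_Ioc] with s hs
    rw [Real.norm_of_nonneg (rpow_nonneg hs.1.le p)]
    exact rpow_le_rpow hs.1.le hs.2 hp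
  exact hf.smul hpow

end PowerKernel

section FracIntegral

open Set ProbabilityTheory

variable {E : Type*} [NormedAddCommGroup E] [NormedSpace ℝ E] {α β a t : ℝ} {f : ℝ → E}

/-- The Riemann–Liouville fractional integral `(I^α_{a+} f)(t)` of order `α` based at `a`. It is
meant for `0 < α`, and it vanishes for `t ≤ a` because `Ioc a t` is then empty. -/
noncomputable def fracIntegral (a α : ℝ) (f : ℝ → E) (t : ℝ) : E :=
  (Gamma α)⁻¹ • ∫ s in Ioc a t, (t - s) ^ (α - 1) • f s

lemma Gamma_smul_fracIntegral (hα : 0 < α) :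
    Gamma α • fracIntegral a α f t = ∫ s in Ioc a t, (t - s) ^ (α - 1) • f s :=
  smul_inv_smul₀ (Gamma_pos_of_pos hα).ne' _

lemma fracIntegral_one : fracIntegral a 1 f t = ∫ s in Ioc a t, f s := by
  simp [fracIntegral]

lemma fracIntegral_const_smul (c : ℝ) :
    fracIntegral a α (fun s ↦ c • f s) t = c • fracIntegral a α f t := by
  simp only [fracIntegral, smul_comm _ c, integral_smul]

lemma norm_fracIntegral_le {C : ℝ} (hα : 0 < α) (hat : a ≤ t)
    (hf : ∀ᵐ s ∂volume.restrict (Ioc a t), ‖f s‖ ≤ C) :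
    ‖fracIntegral a α f t‖ ≤ (Gamma α)⁻¹ * ((t - a) ^ α / α * C) := by
  have hΓ : 0 ≤ (Gamma α)⁻¹ := inv_nonneg.2 (Gamma_pos_of_pos hα).le
  rw [fracIntegral, norm_smul, Real.norm_of_nonneg hΓ, ← integral_sub_rpow hα hat,
    ← integral_mul_const]
  gcongr
  refine norm_integral_le_of_norm_le ((integrableOn_sub_rpow hα).mul_const C) ?_
  filter_upwards [hf, ae_restrict_mem measurableSet_Ioc] with s hs hst
  have hk : 0 ≤ (t - s) ^ (α - 1) := rpow_nonneg (sub_nonneg.2 hst.2) _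
  rw [norm_smul, Real.norm_of_nonneg hk]
  gcongr

lemma exists_norm_fracIntegral_le {b : ℝ} (hα : 0 < α)
    (hf : MemLp f ⊤ (volume.restrict (Ioc a b))) :
    ∃ C, ∀ t ∈ Icc a b, ‖fracIntegral a α f t‖ ≤ C := by
  have hbound := ae_le_lpNorm_exponent_top hf
  refine ⟨(Gamma α)⁻¹ * ((b - a) ^ α / α * lpNorm f ⊤ (volume.restrict (Ioc a b))),
    fun t ht ↦ ?_⟩
  refine (norm_fracIntegral_le hα ht.1
    (ae_restrict_of_ae_restrict_of_subset (Ioc_subset_Ioc_right ht.2) hbound)).trans ?_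
  have hat := sub_nonneg.2 ht.1
  gcongr
  · exact lpNorm_nonneg
  · exact ht.2

theorem fracIntegral_fracIntegral [CompleteSpace E] (hα : 0 < α) (hβ : 0 < β)
    (hf : IntegrableOn (fun s ↦ (t - s) ^ (α + β - 1) • f s) (Ioc a t)) :
    fracIntegral a β (fracIntegral a α f) t = fracIntegral a (α + β) f t := by
  have hΓα := (Gamma_pos_of_pos hα).ne'
  have hΓβ := (Gamma_pos_of_pos hβ).ne'
  calc fracIntegral a β (fracIntegral a α f) t
    _ = ((Gamma β)⁻¹ * (Gamma α)⁻¹) • ∫ u in Ioc a t, ∫ s in Ioc a u,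
          ((t - u) ^ (β - 1) * (u - s) ^ (α - 1)) • f s := by
      simp only [fracIntegral, smul_comm _ (Gamma α)⁻¹, ← integral_smul, mul_smul]
    _ = ((Gamma β)⁻¹ * (Gamma α)⁻¹) • ∫ s in Ioc a t, ∫ u in Icc s t,
          ((t - u) ^ (β - 1) * (u - s) ^ (α - 1)) • f s := by
      rw [setIntegral_triangle_swap (integrableOn_triangle_sub_rpow_mul_sub_rpow_smul hα hβ hf)]
    _ = ((Gamma β)⁻¹ * (Gamma α)⁻¹) • ∫ s in Ioc a t,
          beta α β • (t - s) ^ (α + β - 1) • f s := by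
      congr 1
      refine integral_congr_ae ?_
      filter_upwards [ae_restrict_Ioc_mem_Ioo] with s hs
      rw [integral_smul_const, integral_Icc_eq_integral_Ioc,
        integral_sub_rpow_mul_sub_rpow hα hβ hs.2, mul_smul]
    _ = fracIntegral a (α + β) f t := by
      rw [integral_smul, smul_smul, fracIntegral, beta]
      congr 1
      field_simp

end FracIntegral

section SmallHurst

open Set

variable {H t T : ℝ} {ξ : ℝ → ℝ}

/-- The density `s ^ (1/2 − H) ξ(s)` of `η`; up to constants, `η`, `μ` and `m` are its fractional
integrals of orders `1`, `3/2 − H` and `1/2 − H`. -/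
noncomputable def etaDensity (H : ℝ) (ξ : ℝ → ℝ) (s : ℝ) : ℝ :=
  s ^ (1 / 2 - H) * ξ s

lemma memLp_top_etaDensity (hH : H ≤ 1 / 2) (hξ : MemLp ξ ⊤ (volume.restrict (Ioc 0 t))) :
    MemLp (etaDensity H ξ) ⊤ (volume.restrict (Ioc 0 t)) :=
  memLp_top_rpow_smul (sub_nonneg.2 hH) hξ

lemma eta_eq_fracIntegral : η H ξ t = fracIntegral 0 1 (etaDensity H ξ) t :=
  fracIntegral_one.symm

lemma mufn_eq_fracIntegral (hH : H < 3 / 2) :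
    μfn H ξ t = c₁ H * Gamma (3 / 2 - H) * fracIntegral 0 (3 / 2 - H) (etaDensity H ξ) t := by
  rw [mul_assoc, ← smul_eq_mul (Gamma _), Gamma_smul_fracIntegral (sub_pos.2 hH)]
  simp only [μfn, etaDensity, smul_eq_mul, mul_assoc, show 3 / 2 - H - 1 = 1 / 2 - H by ring]

lemma mfn_eq_fracIntegral (hH : H < 1 / 2) :
    mfn H ξ t = c₁ H * Gamma (3 / 2 - H) * fracIntegral 0 (1 / 2 - H) (etaDensity H ξ) t := by
  have hΓ : Gamma (3 / 2 - H) = (1 / 2 - H) * Gamma (1 / 2 - H) := by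
    rw [← Gamma_add_one (sub_pos.2 hH).ne']
    ring_nf
  rw [hΓ, ← mul_assoc, mul_assoc, ← smul_eq_mul (Gamma _),
    Gamma_smul_fracIntegral (sub_pos.2 hH)]
  simp only [mfn, etaDensity, smul_eq_mul, mul_assoc, show 1 / 2 - H - 1 = -H - 1 / 2 by ring]

lemma integrableOn_mfn_integrand (hH : H < 1 / 2) (hξ : MemLp ξ ⊤ (volume.restrict (Ioc 0 t))) :
    IntegrableOn (fun s ↦ (t - s) ^ (-H - 1 / 2) * s ^ (1 / 2 - H) * ξ s) (Ioc 0 t) := by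
  have h := integrableOn_sub_rpow_smul (sub_pos.2 hH) (memLp_top_etaDensity hH.le hξ)
  simpa only [etaDensity, smul_eq_mul, mul_assoc, show 1 / 2 - H - 1 = -H - 1 / 2 by ring] using h

lemma exists_abs_mfn_le (hH : H < 1 / 2) (hξ : MemLp ξ ⊤ (volume.restrict (Ioc 0 T))) :
    ∃ M, ∀ t ∈ Icc 0 T, |mfn H ξ t| ≤ M := by
  obtain ⟨C, hC⟩ := exists_norm_fracIntegral_le (sub_pos.2 hH) (memLp_top_etaDensity hH.le hξ)
  refine ⟨|c₁ H * Gamma (3 / 2 - H)| * C, fun t ht ↦ ?_⟩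
  rw [mfn_eq_fracIntegral hH, abs_mul]
  exact mul_le_mul_of_nonneg_left (hC t ht) (abs_nonneg _)

lemma fracIntegral_mfn {β : ℝ} (hH : H < 1 / 2) (hβ : 0 < β)
    (hξ : MemLp ξ ⊤ (volume.restrict (Ioc 0 t))) :
    fracIntegral 0 β (mfn H ξ) t =
      c₁ H * Gamma (3 / 2 - H) * fracIntegral 0 (1 / 2 - H + β) (etaDensity H ξ) t := by
  have hm : mfn H ξ = fun s ↦ (c₁ H * Gamma (3 / 2 - H)) •
      fracIntegral 0 (1 / 2 - H) (etaDensity H ξ) s := funext fun _ ↦ mfn_eq_fracIntegral hH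
  have hα : 0 < 1 / 2 - H := sub_pos.2 hH
  rw [hm, fracIntegral_const_smul, fracIntegral_fracIntegral hα hβ
    (integrableOn_sub_rpow_smul (add_pos hα hβ) (memLp_top_etaDensity hH.le hξ)), smul_eq_mul]

lemma mufn_eq_integral_mfn (hH : H < 1 / 2) (hξ : MemLp ξ ⊤ (volume.restrict (Ioc 0 t))) :
    μfn H ξ t = ∫ s in Ioc 0 t, mfn H ξ s := by
  rw [← fracIntegral_one, fracIntegral_mfn hH one_pos hξ, mufn_eq_fracIntegral (by linarith),
    show 1 / 2 - H + 1 = 3 / 2 - H by ring]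

lemma two_mul_Gamma_mul_c₁_mul_Gamma (hH : H ∈ Ioo (-(1 / 2)) (3 / 2)) (hH₀ : H ≠ 0) :
    2 * H * Gamma (H + 1 / 2) * (c₁ H * Gamma (3 / 2 - H)) = 1 := by
  have hΓ₁ : Gamma (3 / 2 - H) ≠ 0 := (Gamma_pos_of_pos (by linarith [hH.2])).ne'
  have hΓ₂ : Gamma (H + 1 / 2) ≠ 0 := (Gamma_pos_of_pos (by linarith [hH.1])).ne'
  have hden : 2 * H * Gamma (3 / 2 - H) * Gamma (H + 1 / 2) ≠ 0 :=
    mul_ne_zero (mul_ne_zero (mul_ne_zero two_ne_zero hH₀) hΓ₁) hΓ₂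
  calc 2 * H * Gamma (H + 1 / 2) * (c₁ H * Gamma (3 / 2 - H))
    _ = 2 * H * Gamma (3 / 2 - H) * Gamma (H + 1 / 2) * c₁ H := by ring
    _ = 1 := mul_one_div_cancel hden

lemma eta_eq_integral_mfn (hH : H ∈ Ioo (-(1 / 2)) (1 / 2)) (hH₀ : H ≠ 0)
    (hξ : MemLp ξ ⊤ (volume.restrict (Ioc 0 t))) :
    η H ξ t = 2 * H * ∫ s in Ioc 0 t, (t - s) ^ (H - 1 / 2) * mfn H ξ s := by
  have hβ : 0 < H + 1 / 2 := by linarith [hH.1]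
  have hc := two_mul_Gamma_mul_c₁_mul_Gamma ⟨hH.1, by linarith [hH.2]⟩ hH₀
  calc η H ξ t
    _ = 2 * H * Gamma (H + 1 / 2) * (c₁ H * Gamma (3 / 2 - H)) *
          fracIntegral 0 1 (etaDensity H ξ) t := by rw [hc, one_mul, eta_eq_fracIntegral]
    _ = 2 * H * (Gamma (H + 1 / 2) • fracIntegral 0 (H + 1 / 2) (mfn H ξ) t) := by
      rw [fracIntegral_mfn hH.2 hβ hξ, show 1 / 2 - H + (H + 1 / 2) = 1 by ring]
      simp only [smul_eq_mul, mul_assoc]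
    _ = 2 * H * ∫ s in Ioc 0 t, (t - s) ^ (H - 1 / 2) * mfn H ξ s := by
      rw [Gamma_smul_fracIntegral hβ, show H + 1 / 2 - 1 = H - 1 / 2 by ring]
      simp only [smul_eq_mul]

theorem mu_eta_small_hurst_general (hH : H ∈ Ioo (-(1 / 2)) (1 / 2)) (hH₀ : H ≠ 0)
    (hξ : MemLp ξ ⊤ (volume.restrict (Ioc 0 T))) :
    (∀ t ∈ Icc 0 T, IntegrableOn
        (fun s ↦ (t - s) ^ (-H - 1 / 2) * s ^ (1 / 2 - H) * ξ s) (Ioc 0 t)) ∧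
    (∃ M, ∀ t ∈ Icc 0 T, |mfn H ξ t| ≤ M) ∧
    (∀ t ∈ Icc 0 T, μfn H ξ t = ∫ s in Ioc 0 t, mfn H ξ s) ∧
    (∀ t ∈ Icc 0 T, η H ξ t = 2 * H * ∫ s in Ioc 0 t, (t - s) ^ (H - 1 / 2) * mfn H ξ s) := by
  have hξt : ∀ t ∈ Icc 0 T, MemLp ξ ⊤ (volume.restrict (Ioc 0 t)) := fun t ht ↦
    hξ.mono_measure (Measure.restrict_mono (Ioc_subset_Ioc_right ht.2) le_rfl)
  exact ⟨fun t ht ↦ integrableOn_mfn_integrand hH.2 (hξt t ht), exists_abs_mfn_le hH.2 hξ,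
    fun t ht ↦ mufn_eq_integral_mfn hH.2 (hξt t ht),
    fun t ht ↦ eta_eq_integral_mfn hH hH₀ (hξt t ht)⟩

lemma memLp_top_restrict_Ioc_of_forall_abs_le {a b M : ℝ} (hξm : Measurable ξ)
    (hξ : ∀ t ∈ Icc a b, |ξ t| ≤ M) : MemLp ξ ⊤ (volume.restrict (Ioc a b)) :=
  memLp_top_of_bound hξm.aestronglyMeasurable M
    (ae_restrict_of_forall_mem measurableSet_Ioc fun t ht ↦ hξ t (Ioc_subset_Icc_self ht))

end SmallHurst

theorem mu_eta_small_hurst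
    (H T : ℝ) (hH : H ∈ Set.Ioo (0 : ℝ) (1 / 2)) (hT : 0 < T)
    (ξ : ℝ → ℝ) (hξmeas : Measurable ξ)
    (hξbdd : ∃ M : ℝ, ∀ t ∈ Set.Icc (0 : ℝ) T, |ξ t| ≤ M) :
    (∀ t ∈ Set.Icc (0 : ℝ) T, IntegrableOn
        (fun s => (t - s) ^ (-H - 1 / 2) * s ^ (1 / 2 - H) * ξ s) (Set.Ioc (0 : ℝ) t) volume) ∧
    (∃ M : ℝ, ∀ t ∈ Set.Icc (0 : ℝ) T, |mfn H ξ t| ≤ M) ∧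
    (∀ t ∈ Set.Icc (0 : ℝ) T, μfn H ξ t = ∫ s in Set.Ioc (0 : ℝ) t, mfn H ξ s) ∧
    (∀ t ∈ Set.Icc (0 : ℝ) T,
      η H ξ t = 2 * H * ∫ s in Set.Ioc (0 : ℝ) t, (t - s) ^ (H - 1 / 2) * mfn H ξ s) := by
  obtain ⟨M, hM⟩ := hξbdd
  exact mu_eta_small_hurst_general ⟨by linarith [hH.1], hH.2⟩ hH.1.ne'
    (memLp_top_restrict_Ioc_of_forall_abs_le hξmeas hM)
end

section
/- Let H ∈ (1/2, 1), T > 0, and let ξ : [0,T] → ℝ be Hölder continuous with some exponent α ∈ (2H − 1, 1] and satisfy ξ(0) = 0. Set c₁ := 1/(2H Γ(3/2 − H) Γ(H + 1/2)), and define η(t) := ∫₀^t s^{1/2−H} ξ(s) ds and μ(t) := c₁ ∫₀^t (t − s)^{1/2−H} s^{1/2−H} ξ(s) ds for t ∈ [0,T]. Then there exists a function m : [0,T] → ℝ that is Hölder continuous (with exponent α + 1 − 2H) and in particular bounded, such that μ(t) = ∫₀^t m(s) ds for all t ∈ [0,T] and η(t) = 2H ∫₀^t (t − s)^{H−1/2}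 m(s) ds for all t ∈ [0,T]. -/
open MeasureTheory Real

/-!
Put `β = H - 1/2`, let `g` be `s ↦ s ^ (-β) ξ(s)` on `[0, T]`, constant beyond the endpoints, and
write `I ^ a` for the Riemann–Liouville integral of order `a`. Since `ξ(0) = 0`, the function `g` is
Hölder of exponent `α - β > β` and vanishes on `(-∞, 0]`, so its Marchaud derivative `D g` of order
`β` is Hölder of exponent `α - 2β`. Exchanging the order of integration gives
`I ^ 1 (D g) = I ^ (1 - β) g`, which is `μ` up to a constant; the semigroup law then yields
`I ^ (1 + β) (D g) = I ^ β (I ^ (1 - β) g) = I ^ 1 g = η`. Hence `m` is a multiple of `D g`.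
-/

open Set
open scoped NNReal

theorem holderOnWith_of_dist_le {X Y : Type*} [PseudoMetricSpace X] [PseudoMetricSpace Y]
    {C r : ℝ≥0} {f : X → Y} {S : Set X}
    (h : ∀ x ∈ S, ∀ y ∈ S, dist (f x) (f y) ≤ C * dist x y ^ (r : ℝ)) : HolderOnWith C r f S := by
  intro x hx y hy
  have hxy := h x hx y hy
  rw [dist_nndist, dist_nndist] at hxy
  rw [edist_nndist, edist_nndist, ← ENNReal.coe_rpow_of_nonneg _ r.coe_nonneg]
  exact_mod_cast hxy

theorem holderWith_IccExtend {Y : Type*} [PseudoEMetricSpace Y] {C r : ℝ≥0} {f : ℝ → Y} {a b : ℝ}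
    (hab : a ≤ b) (hf : HolderOnWith C r f (Icc a b)) :
    HolderWith C r (IccExtend hab ((Icc a b).domRestrict f)) := by
  simpa [IccExtend] using hf.holderWith.comp (holderWith_one.2 (LipschitzWith.projIcc hab))

theorem rpow_mul_one_sub_rpow_le {x β γ : ℝ} (hx₀ : 0 ≤ x) (hx₁ : x ≤ 1) (hβ₀ : 0 ≤ β)
    (hβ₁ : β ≤ 1) (hγ₀ : 0 ≤ γ) (hγ₁ : γ ≤ 1) : x ^ γ * (1 - x ^ β) ≤ (1 - x) ^ γ :=
  calc x ^ γ * (1 - x ^ β) ≤ 1 * (1 - x ^ β) := by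
        gcongr
        · exact sub_nonneg.2 (rpow_le_one hx₀ hx₁ hβ₀)
        · exact rpow_le_one hx₀ hx₁ hγ₀
    _ ≤ 1 - x := by linarith [self_le_rpow_of_le_one hx₀ hx₁ hβ₁]
    _ ≤ (1 - x) ^ γ := self_le_rpow_of_le_one (by linarith) (by linarith) hγ₁

theorem abs_rpow_neg_sub_rpow_neg_mul_rpow_le {s t β γ : ℝ} (hs : 0 ≤ s) (hst : s ≤ t) (hβ : 0 < β)
    (hγ : 0 ≤ γ) (hβγ : β + γ ≤ 1) :
    |s ^ (-β) - t ^ (-β)| * s ^ (β + γ) ≤ (t - s) ^ γ := by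
  rcases hs.eq_or_lt with rfl | hs
  · rw [(zero_rpow (by linarith) : (0 : ℝ) ^ (β + γ) = 0), mul_zero]
    exact rpow_nonneg (by linarith) γ
  have ht : 0 < t := hs.trans_le hst
  have hpow : t ^ (-β) * s ^ β = (s / t) ^ β := by
    rw [div_rpow hs.le ht.le, rpow_neg ht.le, inv_mul_eq_div]
  rw [abs_of_nonneg (sub_nonneg.2 (rpow_le_rpow_of_nonpos hs hst (by linarith)))]
  calc (s ^ (-β) - t ^ (-β)) * s ^ (β + γ)
      = s ^ γ * (s ^ (-β) * s ^ β - t ^ (-β) * s ^ β) := by rw [rpow_add hs]; ring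
    _ = t ^ γ * ((s / t) ^ γ * (1 - (s / t) ^ β)) := by
        rw [hpow, ← rpow_add hs, neg_add_cancel, rpow_zero, ← mul_assoc,
          ← mul_rpow ht.le (by positivity), mul_div_cancel₀ s ht.ne']
    _ ≤ t ^ γ * (1 - s / t) ^ γ := by
        gcongr
        exact rpow_mul_one_sub_rpow_le (by positivity) ((div_le_one ht).2 hst) hβ.le
          (by linarith) hγ (by linarith)
    _ = (t - s) ^ γ := by
        rw [← mul_rpow ht.le (sub_nonneg.2 ((div_le_one ht).2 hst)), mul_one_sub,
          mul_div_cancel₀ s ht.ne']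

theorem rpow_neg_mul_sub_rpow_le {s t β γ : ℝ} (hs : 0 ≤ s) (hst : s ≤ t) (hβ : 0 < β)
    (hγ : 0 ≤ γ) :
    t ^ (-β) * (t - s) ^ (β + γ) ≤ (t - s) ^ γ := by
  rcases hst.eq_or_lt with rfl | hst
  · rw [sub_self, zero_rpow (by linarith), mul_zero]
    exact rpow_nonneg le_rfl γ
  have hd : 0 < t - s := sub_pos.2 hst
  calc t ^ (-β) * (t - s) ^ (β + γ) ≤ (t - s) ^ (-β) * (t - s) ^ (β + γ) := by
        gcongr ?_ * _
        exact rpow_le_rpow_of_nonpos hd (by linarith) (by linarith)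
    _ = (t - s) ^ γ := by rw [← rpow_add hd, neg_add_cancel_left]

variable {E : Type*} [NormedAddCommGroup E]

theorem norm_sub_comp_sub_sub_le {C γ : ℝ≥0} {g : ℝ → E} (hg : HolderWith C γ g) (x y : ℝ) {u : ℝ}
    (hu : 0 ≤ u) :
    ‖(g x - g (x - u)) - (g y - g (y - u))‖ ≤ 2 * C * min u (dist x y) ^ (γ : ℝ) := by
  rcases min_choice u (dist x y) with h | h <;> rw [h, mul_assoc, two_mul]
  · have hshift z : ‖g z - g (z - u)‖ ≤ C * u ^ (γ : ℝ) := by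
      simpa [dist_eq_norm, abs_of_nonneg hu] using hg.dist_le z (z - u)
    exact (norm_sub_le _ _).trans (add_le_add (hshift x) (hshift y))
  · rw [sub_sub_sub_comm]
    refine (norm_sub_le _ _).trans ?_
    rw [← dist_eq_norm, ← dist_eq_norm]
    refine add_le_add (hg.dist_le x y) ?_
    simpa using hg.dist_le (x - u) (y - u)

theorem norm_sub_comp_sub_le {C γ : ℝ≥0} {g : ℝ → E} (hg : HolderWith C γ g)
    (hg0 : ∀ x ≤ 0, g x = 0) {x u h : ℝ} (hu : 0 ≤ u) (hh : 0 ≤ h) (hxh : x ≤ h) :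
    ‖g x - g (x - u)‖ ≤ C * min u h ^ (γ : ℝ) := by
  rcases le_total x 0 with hx | hx
  · rw [hg0 x hx, hg0 (x - u) (by linarith), sub_zero, norm_zero]
    exact mul_nonneg C.2 (rpow_nonneg (le_min hu hh) _)
  have htrunc : g (x - u) = g (max (x - u) 0) := by
    rcases le_total (x - u) 0 with hxu | hxu
    · rw [max_eq_right hxu, hg0 _ hxu, hg0 0 le_rfl]
    · rw [max_eq_left hxu]
  have hdist : dist x (max (x - u) 0) = min u x := by
    rw [Real.dist_eq, ← min_sub_sub_left, sub_sub_cancel, sub_zero, abs_of_nonneg (le_min hu hx)]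
  rw [htrunc, ← dist_eq_norm]
  refine (hg.dist_le x _).trans ?_
  rw [hdist]
  gcongr

variable [NormedSpace ℝ E]

theorem holderOnWith_rpow_neg_smul {C β γ : ℝ≥0} {f : ℝ → E} {S : Set ℝ}
    (hf : HolderOnWith C (β + γ) f S) (hS : ∀ s ∈ S, 0 ≤ s) (hS0 : 0 ∈ S) (hf0 : f 0 = 0)
    (hβ : 0 < β) (hβγ : β + γ ≤ 1) :
    HolderOnWith (2 * C) γ (fun s => s ^ (-β : ℝ) • f s) S := by
  have hβ' : (0 : ℝ) < β := hβ
  have hβγ' : (β + γ : ℝ) ≤ 1 := hβγ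
  have main {s t : ℝ} (hs : s ∈ S) (ht : t ∈ S) (hst : s ≤ t) :
      dist (s ^ (-β : ℝ) • f s) (t ^ (-β : ℝ) • f t) ≤ 2 * C * dist s t ^ (γ : ℝ) := by
    have hfs : ‖f s‖ ≤ C * s ^ (β + γ : ℝ) := by
      simpa [hf0, abs_of_nonneg (hS s hs)] using hf.dist_le hs hS0
    have hfts : ‖f t - f s‖ ≤ C * (t - s) ^ (β + γ : ℝ) := by
      simpa [← dist_eq_norm, Real.dist_eq, abs_of_nonneg (sub_nonneg.2 hst)]
        using hf.dist_le ht hs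
    have hsplit : t ^ (-β : ℝ) • f t - s ^ (-β : ℝ) • f s
        = t ^ (-β : ℝ) • (f t - f s) - (s ^ (-β : ℝ) - t ^ (-β : ℝ)) • f s := by module
    rw [dist_comm, dist_comm s, dist_eq_norm, Real.dist_eq, abs_of_nonneg (sub_nonneg.2 hst),
      hsplit]
    calc _ ≤ ‖t ^ (-β : ℝ) • (f t - f s)‖ + ‖(s ^ (-β : ℝ) - t ^ (-β : ℝ)) • f s‖ :=
          norm_sub_le _ _
      _ ≤ t ^ (-β : ℝ) * (C * (t - s) ^ (β + γ : ℝ))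
          + |s ^ (-β : ℝ) - t ^ (-β : ℝ)| * (C * s ^ (β + γ : ℝ)) := by
          rw [norm_smul, norm_smul, Real.norm_eq_abs, Real.norm_eq_abs,
            abs_of_nonneg (rpow_nonneg (hS t ht) _)]
          gcongr
          exact rpow_nonneg (hS t ht) _
      _ = C * (t ^ (-β : ℝ) * (t - s) ^ (β + γ : ℝ)
          + |s ^ (-β : ℝ) - t ^ (-β : ℝ)| * s ^ (β + γ : ℝ)) := by ring
      _ ≤ C * ((t - s) ^ (γ : ℝ) + (t - s) ^ (γ : ℝ)) := by
          gcongr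
          · exact rpow_neg_mul_sub_rpow_le (hS s hs) hst hβ' γ.2
          · exact abs_rpow_neg_sub_rpow_neg_mul_rpow_le (hS s hs) hst hβ' γ.2 hβγ'
      _ = 2 * C * (t - s) ^ (γ : ℝ) := by ring
  refine holderOnWith_of_dist_le fun s hs t ht => ?_
  rcases le_total s t with hst | hts
  · exact main hs ht hst
  · rw [dist_comm, dist_comm s]
    exact main ht hs hts

theorem integral_sub_rpow_mul_rpow {a b x : ℝ} (ha : 0 < a) (hb : 0 < b) (hx : 0 < x) :
    ∫ s in Ioc 0 x, (x - s) ^ (a - 1) * s ^ (b - 1)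
      = Gamma a * Gamma b / Gamma (a + b) * x ^ (a + b - 1) := by
  rw [← Complex.ofReal_inj, ← integral_complex_ofReal]
  calc ∫ s in Ioc 0 x, (((x - s) ^ (a - 1) * s ^ (b - 1) : ℝ) : ℂ)
      = ∫ s in (0 : ℝ)..x, (s : ℂ) ^ ((b : ℂ) - 1) * ((x : ℂ) - s) ^ ((a : ℂ) - 1) := by
        rw [intervalIntegral.integral_of_le hx.le]
        refine setIntegral_congr_fun measurableSet_Ioc fun s hs => ?_
        push_cast [Complex.ofReal_cpow (sub_nonneg.2 hs.2), Complex.ofReal_cpow hs.1.le]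
        ring
    _ = (x : ℂ) ^ ((b : ℂ) + a - 1) * Complex.betaIntegral b a :=
        Complex.betaIntegral_scaled b a hx
    _ = ((Gamma a * Gamma b / Gamma (a + b) * x ^ (a + b - 1) : ℝ) : ℂ) := by
        rw [Complex.betaIntegral_eq_Gamma_mul_div _ _ (by simpa using hb) (by simpa using ha)]
        push_cast [← Complex.Gamma_ofReal, Complex.ofReal_cpow hx.le]
        ring_nf

/-- The Riemann–Liouville kernel `x₊ ^ (a - 1) / Γ(a)` of order `a`, set to `0` for `x ≤ 0`: with
this cutoff the convolution of two kernels is an integral over all of `ℝ`. -/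
noncomputable def rlKernel (a x : ℝ) : ℝ := (Ioi 0).indicator (fun y => y ^ (a - 1) / Gamma a) x

theorem rlKernel_of_pos {x : ℝ} (a : ℝ) (hx : 0 < x) : rlKernel a x = x ^ (a - 1) / Gamma a :=
  indicator_of_mem hx _

theorem rlKernel_of_nonpos {x : ℝ} (a : ℝ) (hx : x ≤ 0) : rlKernel a x = 0 :=
  indicator_of_notMem hx.not_gt _

theorem rlKernel_pos {a x : ℝ} (ha : 0 < a) (hx : 0 < x) : 0 < rlKernel a x := by
  rw [rlKernel_of_pos a hx]
  exact div_pos (rpow_pos_of_pos hx _) (Gamma_pos_of_pos ha)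

theorem rlKernel_nonneg {a : ℝ} (ha : 0 < a) (x : ℝ) : 0 ≤ rlKernel a x := by
  rcases le_or_gt x 0 with hx | hx
  · exact (rlKernel_of_nonpos a hx).ge
  · exact (rlKernel_pos ha hx).le

theorem measurable_rlKernel (a : ℝ) : Measurable (rlKernel a) :=
  ((measurable_id.pow_const _).div_const _).indicator measurableSet_Ioi

theorem rlKernel_mul_rlKernel_eq_indicator (a b x : ℝ) :
    (fun s => rlKernel a (x - s) * rlKernel b s) = (Ioo 0 x).indicator fun s =>
      (Gamma a * Gamma b)⁻¹ * ((x - s) ^ (a - 1) * s ^ (b - 1)) := by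
  ext s
  by_cases hs : s ∈ Ioo 0 x
  · rw [indicator_of_mem hs, rlKernel_of_pos a (sub_pos.2 hs.2), rlKernel_of_pos b hs.1]
    field
  · rw [indicator_of_notMem hs]
    rcases le_or_gt s 0 with h | h
    · rw [rlKernel_of_nonpos b h, mul_zero]
    · rw [rlKernel_of_nonpos a (sub_nonpos.2 (not_lt.1 fun h' => hs ⟨h, h'⟩)), zero_mul]

theorem integral_rlKernel_mul_rlKernel {a b : ℝ} (ha : 0 < a) (hb : 0 < b) (x : ℝ) :
    ∫ s, rlKernel a (x - s) * rlKernel b s = rlKernel (a + b) x := by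
  rw [rlKernel_mul_rlKernel_eq_indicator, integral_indicator measurableSet_Ioo]
  rcases le_or_gt x 0 with hx | hx
  · rw [Ioo_eq_empty hx.not_gt, setIntegral_empty, rlKernel_of_nonpos _ hx]
  · have := (Gamma_pos_of_pos ha).ne'
    have := (Gamma_pos_of_pos hb).ne'
    rw [integral_const_mul, ← integral_Ioc_eq_integral_Ioo, integral_sub_rpow_mul_rpow ha hb hx,
      rlKernel_of_pos _ hx]
    field

theorem integrable_rlKernel_mul_rlKernel {a b : ℝ} (ha : 0 < a) (hb : 0 < b) (x : ℝ) :
    Integrable fun s => rlKernel a (x - s) * rlKernel b s := by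
  rcases le_or_gt x 0 with hx | hx
  · simp [rlKernel_mul_rlKernel_eq_indicator, Ioo_eq_empty hx.not_gt]
  · apply Integrable.of_integral_ne_zero
    rw [integral_rlKernel_mul_rlKernel ha hb]
    exact (rlKernel_pos (add_pos ha hb) hx).ne'

theorem integral_integral_smul_of_nonneg {X Y : Type*} [MeasurableSpace X] [MeasurableSpace Y]
    [CompleteSpace E] {μ : Measure X} {ν : Measure Y} [SFinite μ] [SFinite ν] {K : X → Y → ℝ}
    {f : Y → E}
    (hK : Measurable (Function.uncurry K)) (hK0 : ∀ᵐ y ∂ν, ∀ᵐ x ∂μ, 0 ≤ K x y)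
    (hKi : ∀ᵐ y ∂ν, Integrable (fun x => K x y) μ) (hf : AEStronglyMeasurable f ν)
    (hKf : Integrable (fun y => (∫ x, K x y ∂μ) • f y) ν) :
    ∫ x, ∫ y, K x y • f y ∂ν ∂μ = ∫ y, (∫ x, K x y ∂μ) • f y ∂ν := by
  have hint : Integrable (Function.uncurry fun x y => K x y • f y) (μ.prod ν) := by
    have hmeas : AEStronglyMeasurable (Function.uncurry fun x y => K x y • f y) (μ.prod ν) :=
      hK.aestronglyMeasurable.smul hf.comp_snd
    refine (integrable_prod_iff' hmeas).2 ⟨?_, ?_⟩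
    · filter_upwards [hKi] with y hy using hy.smul_const (f y)
    · refine hKf.norm.congr ?_
      filter_upwards [hK0] with y hy
      rw [norm_smul, norm_of_nonneg (integral_nonneg_of_ae hy), ← integral_mul_const]
      refine integral_congr_ae ?_
      filter_upwards [hy] with x hx
      rw [Function.uncurry_apply_pair, norm_smul, norm_of_nonneg hx]
  simp_rw [integral_integral_swap hint, integral_smul_const]

/-- The Riemann–Liouville fractional integral of order `a` with base point `0`. The integral runs
over all `s > 0`; the kernel vanishes for `s ≥ t`. -/
noncomputable def rlIntegral (a : ℝ) (f : ℝ → E) (t : ℝ) : E :=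
  ∫ s in Ioi 0, rlKernel a (t - s) • f s

theorem rlIntegral_of_nonpos (a : ℝ) (f : ℝ → E) {t : ℝ} (ht : t ≤ 0) : rlIntegral a f t = 0 := by
  refine setIntegral_eq_zero_of_forall_eq_zero fun s hs => ?_
  rw [rlKernel_of_nonpos a (by linarith [mem_Ioi.1 hs]), zero_smul]

theorem rlIntegral_eq_smul_integral_Ioc (a : ℝ) (f : ℝ → E) (t : ℝ) :
    rlIntegral a f t = (Gamma a)⁻¹ • ∫ s in Ioc 0 t, (t - s) ^ (a - 1) • f s := by
  have h : ∀ s, rlKernel a (t - s) • f s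
      = (Iio t).indicator (fun s => (Gamma a)⁻¹ • (t - s) ^ (a - 1) • f s) s := by
    intro s
    by_cases hs : s < t
    · rw [indicator_of_mem (mem_Iio.2 hs), rlKernel_of_pos a (sub_pos.2 hs), smul_smul,
        inv_mul_eq_div]
    · rw [indicator_of_notMem (notMem_Iio.2 (not_lt.1 hs)), rlKernel_of_nonpos a (by linarith),
        zero_smul]
  simp_rw [rlIntegral, h]
  rw [setIntegral_indicator measurableSet_Iio, Ioi_inter_Iio, integral_smul,
    integral_Ioc_eq_integral_Ioo]

theorem rlIntegral_rlIntegral [CompleteSpace E] {a b t : ℝ} {f : ℝ → E} (ha : 0 < a) (hb : 0 < b)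
    (hf : AEStronglyMeasurable f (volume.restrict (Ioi 0)))
    (hfi : IntegrableOn (fun s => rlKernel (a + b) (t - s) • f s) (Ioi 0)) :
    rlIntegral a (rlIntegral b f) t = rlIntegral (a + b) f t := by
  have hK r : ∫ s, rlKernel a (t - s) * rlKernel b (s - r) = rlKernel (a + b) (t - r) := by
    simpa only [sub_sub_sub_cancel_right, integral_rlKernel_mul_rlKernel ha hb] using
      integral_sub_right_eq_self (μ := volume) (fun s => rlKernel a (t - r - s) * rlKernel b s) r
  have hKi r : Integrable fun s => rlKernel a (t - s) * rlKernel b (s - r) := by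
    simpa only [sub_sub_sub_cancel_right] using
      (integrable_rlKernel_mul_rlKernel ha hb (t - r)).comp_sub_right r
  have hKm : Measurable (Function.uncurry fun s r => rlKernel a (t - s) * rlKernel b (s - r)) :=
    ((measurable_rlKernel a).comp (by fun_prop)).mul ((measurable_rlKernel b).comp (by fun_prop))
  calc rlIntegral a (rlIntegral b f) t
      = ∫ s, rlKernel a (t - s) • rlIntegral b f s :=
        setIntegral_eq_integral_of_forall_compl_eq_zero fun s hs => by
          rw [rlIntegral_of_nonpos b f (not_lt.1 hs), smul_zero]
    _ = ∫ s, ∫ r in Ioi 0, (rlKernel a (t - s) * rlKernel b (s - r)) • f r := by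
        simp only [rlIntegral, ← integral_smul, smul_smul]
    _ = ∫ r in Ioi 0, rlKernel (a + b) (t - r) • f r := by
        simpa only [hK] using integral_integral_smul_of_nonneg hKm
          (.of_forall fun r => .of_forall fun s =>
            mul_nonneg (rlKernel_nonneg ha _) (rlKernel_nonneg hb _)) (.of_forall hKi) hf
          (by simpa only [hK, IntegrableOn] using hfi)

theorem rlIntegral_one (f : ℝ → E) (t : ℝ) : rlIntegral 1 f t = ∫ s in Ioc 0 t, f s := by
  simp [rlIntegral_eq_smul_integral_Ioc]

theorem integrableOn_rlKernel_sub {a : ℝ} (ha : 0 < a) (t : ℝ) :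
    IntegrableOn (fun s => rlKernel a (t - s)) (Ioi 0) :=
  (integrable_rlKernel_mul_rlKernel ha one_pos t).integrableOn.congr_fun
    (fun s hs => by simp [rlKernel_of_pos 1 hs]) measurableSet_Ioi

theorem integrableOn_rlKernel_smul {a : ℝ} (ha : 0 < a) {f : ℝ → E} (hf : Continuous f) (t : ℝ) :
    IntegrableOn (fun s => rlKernel a (t - s) • f s) (Ioi 0) := by
  have h : IntegrableOn (fun s => rlKernel a (t - s) • f s) (Ioc 0 t) :=
    ((integrableOn_rlKernel_sub ha t).mono_set Ioc_subset_Ioi_self).smul_continuousOn_of_subset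
      hf.continuousOn measurableSet_Ioc isCompact_Icc Ioc_subset_Icc_self
  refine h.of_forall_sdiff_eq_zero measurableSet_Ioi fun s hs => ?_
  rw [rlKernel_of_nonpos a (sub_nonpos.2 (not_lt.1 fun hst => hs.2 ⟨hs.1, hst.le⟩)), zero_smul]

theorem integral_rpow_mul_min_rpow {β δ h : ℝ} (hβ : 0 < β) (hδ : 0 < δ) (hh : 0 < h) :
    ∫ u in Ioi 0, u ^ (-β - 1) * min u h ^ (β + δ) = (1 / δ + 1 / β) * h ^ δ := by
  have near : ∫ u in Ioc 0 h, u ^ (-β - 1) * min u h ^ (β + δ) = h ^ δ / δ := by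
    calc ∫ u in Ioc 0 h, u ^ (-β - 1) * min u h ^ (β + δ)
        = ∫ u in (0)..h, u ^ (δ - 1) := by
          rw [intervalIntegral.integral_of_le hh.le]
          refine setIntegral_congr_fun measurableSet_Ioc fun u hu => ?_
          rw [min_eq_left hu.2, ← rpow_add hu.1]
          ring_nf
      _ = h ^ δ / δ := by
          rw [integral_rpow (.inl (by linarith)), sub_add_cancel, zero_rpow hδ.ne', sub_zero]
  have far : ∫ u in Ioi h, u ^ (-β - 1) * min u h ^ (β + δ) = h ^ δ / β := by
    calc ∫ u in Ioi h, u ^ (-β - 1) * min u h ^ (β + δ)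
        = (∫ u in Ioi h, u ^ (-β - 1)) * h ^ (β + δ) := by
          rw [← integral_mul_const]
          refine setIntegral_congr_fun measurableSet_Ioi fun u hu => ?_
          rw [min_eq_right (mem_Ioi.1 hu).le]
      _ = h ^ δ / β := by
          rw [integral_Ioi_rpow_of_lt (by linarith) hh, sub_add_cancel, neg_div_neg_eq,
            div_mul_eq_mul_div, ← rpow_add hh, neg_add_cancel_left]
  rw [← Ioc_union_Ioi_eq_Ioi hh.le, setIntegral_union (Ioc_disjoint_Ioi le_rfl) measurableSet_Ioi
    (.of_integral_ne_zero (by rw [near]; positivity))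
    (.of_integral_ne_zero (by rw [far]; positivity)), near, far]
  ring

theorem integrableOn_rpow_mul_min_rpow {β δ h : ℝ} (hβ : 0 < β) (hδ : 0 < δ) (hh : 0 < h) :
    IntegrableOn (fun u => u ^ (-β - 1) * min u h ^ (β + δ)) (Ioi 0) :=
  .of_integral_ne_zero (by rw [integral_rpow_mul_min_rpow hβ hδ hh]; positivity)

theorem norm_rpow_smul_le_of_norm_le {β γ h A u : ℝ} {φ : ℝ → E} (hu : 0 < u)
    (hφ : ‖φ u‖ ≤ A * min u h ^ γ) :
    ‖u ^ (-β - 1) • φ u‖ ≤ A * (u ^ (-β - 1) * min u h ^ γ) := by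
  have hpow : 0 ≤ u ^ (-β - 1) := rpow_nonneg hu.le _
  rw [norm_smul, norm_of_nonneg hpow, mul_left_comm]
  gcongr

theorem integrableOn_rpow_smul_of_norm_le {β δ h A : ℝ} {φ : ℝ → E} (hβ : 0 < β) (hδ : 0 < δ)
    (hh : 0 < h) (hφ : AEStronglyMeasurable φ (volume.restrict (Ioi 0)))
    (hA : ∀ u > 0, ‖φ u‖ ≤ A * min u h ^ (β + δ)) :
    IntegrableOn (fun u => u ^ (-β - 1) • φ u) (Ioi 0) := by
  refine ((integrableOn_rpow_mul_min_rpow hβ hδ hh).const_mul A).mono'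
    ((measurable_id.pow_const _).aestronglyMeasurable.smul hφ) ?_
  filter_upwards [ae_restrict_mem measurableSet_Ioi] with u hu
  exact norm_rpow_smul_le_of_norm_le hu (hA u hu)

theorem norm_integral_rpow_smul_le {β δ h A : ℝ} {φ : ℝ → E} (hβ : 0 < β) (hδ : 0 < δ)
    (hh : 0 < h) (hA : ∀ u > 0, ‖φ u‖ ≤ A * min u h ^ (β + δ)) :
    ‖∫ u in Ioi 0, u ^ (-β - 1) • φ u‖ ≤ A * ((1 / δ + 1 / β) * h ^ δ) := by
  rw [← integral_rpow_mul_min_rpow hβ hδ hh, ← integral_const_mul]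
  refine norm_integral_le_of_norm_le ((integrableOn_rpow_mul_min_rpow hβ hδ hh).const_mul A) ?_
  filter_upwards [ae_restrict_mem measurableSet_Ioi] with u hu
  exact norm_rpow_smul_le_of_norm_le hu (hA u hu)

/-- The Marchaud fractional derivative of order `β ∈ (0, 1)` of a function on `ℝ`. On functions
that vanish on `(-∞, 0]` and are Hölder of exponent greater than `β`, it inverts `rlIntegral β`. -/
noncomputable def marchaudDeriv (β : ℝ) (g : ℝ → E) (t : ℝ) : E :=
  (β / Gamma (1 - β)) • ∫ u in Ioi 0, u ^ (-β - 1) • (g t - g (t - u))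

section MarchaudDeriv

variable {C β δ : ℝ≥0} {g : ℝ → E}

theorem integrableOn_marchaud (hβ : 0 < β) (hδ : 0 < δ) (hg : HolderWith C (β + δ) g)
    (hg0 : ∀ x ≤ 0, g x = 0) (t : ℝ) :
    IntegrableOn (fun u => u ^ (-β - 1 : ℝ) • (g t - g (t - u))) (Ioi 0) := by
  have hgc : Continuous g := hg.continuous (by positivity)
  have hh : 0 < max t 1 := by positivity
  exact integrableOn_rpow_smul_of_norm_le hβ hδ hh
    (Continuous.aestronglyMeasurable (by fun_prop)) fun u hu =>
      norm_sub_comp_sub_le hg hg0 hu.le hh.le (le_max_left t 1)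

theorem memHolder_marchaudDeriv (hβ : 0 < β) (hδ : 0 < δ) (hg : HolderWith C (β + δ) g)
    (hg0 : ∀ x ≤ 0, g x = 0) : MemHolder δ (marchaudDeriv β g) := by
  refine ⟨‖(β / Gamma (1 - β) : ℝ)‖₊ * (2 * C * (1 / δ + 1 / β)),
    holderOnWith_univ.1 (holderOnWith_of_dist_le fun x _ y _ => ?_)⟩
  rcases eq_or_ne x y with rfl | hxy
  · rw [dist_self, dist_self]
    positivity
  rw [dist_eq_norm, marchaudDeriv, marchaudDeriv, ← smul_sub,
    ← integral_sub (integrableOn_marchaud hβ hδ hg hg0 x) (integrableOn_marchaud hβ hδ hg hg0 y),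
    norm_smul]
  simp_rw [← smul_sub]
  push_cast
  rw [mul_assoc, mul_assoc (2 * C : ℝ)]
  gcongr
  exact norm_integral_rpow_smul_le hβ hδ (dist_pos.2 hxy) fun u hu =>
    norm_sub_comp_sub_sub_le hg x y (le_of_lt hu)

end MarchaudDeriv

theorem integral_indicator_Ioi_rpow {β a : ℝ} (hβ : 0 < β) (ha : 0 < a) :
    ∫ u in Ioi 0, (Ioi a).indicator (fun u => u ^ (-β - 1)) u = a ^ (-β) / β := by
  rw [setIntegral_indicator measurableSet_Ioi, Ioi_inter_Ioi, max_eq_right ha.le,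
    integral_Ioi_rpow_of_lt (by linarith) ha, sub_add_cancel, neg_div_neg_eq]

theorem integral_Ioc_sub_comp_sub {g : ℝ → E} (hg : Continuous g) (hg0 : ∀ x ≤ 0, g x = 0)
    {t u : ℝ} (ht : 0 ≤ t) (hu : 0 ≤ u) :
    ∫ r in Ioc 0 t, (g r - g (r - u)) = ∫ s in Ioo 0 t, (Ioi (t - u)).indicator g s := by
  have hint a b : IntervalIntegrable g volume a b := hg.intervalIntegrable a b
  have hneg : ∫ s in (0 - u)..0, g s = 0 := by
    rw [intervalIntegral.integral_of_le (by linarith)]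
    exact setIntegral_eq_zero_of_forall_eq_zero fun s hs => hg0 s hs.2
  calc ∫ r in Ioc 0 t, (g r - g (r - u)) = ∫ s in (t - u)..t, g s := by
        rw [← intervalIntegral.integral_of_le ht, intervalIntegral.integral_sub (hint 0 t)
          (Continuous.intervalIntegrable (by fun_prop) 0 t),
          intervalIntegral.integral_comp_sub_right,
          intervalIntegral.integral_interval_sub_interval_comm' (hint _ _) (hint _ _) (hint _ _),
          hneg, sub_zero]
    _ = ∫ s in Ioo 0 t ∩ Ioi (t - u), g s := by
        rw [intervalIntegral.integral_of_le (by linarith), integral_Ioc_eq_integral_Ioo]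
        refine setIntegral_eq_of_subset_of_forall_sdiff_eq_zero measurableSet_Ioo
          (fun s hs => ⟨hs.2, hs.1.2⟩) fun s hs => hg0 s ?_
        exact not_lt.1 fun hs0 => hs.2 ⟨⟨hs0, hs.1.2⟩, hs.1.1⟩
    _ = ∫ s in Ioo 0 t, (Ioi (t - u)).indicator g s :=
        (setIntegral_indicator measurableSet_Ioi).symm

theorem integral_integral_indicator_rpow_smul [CompleteSpace E] {β : ℝ} {g : ℝ → E}
    (hβ : 0 < β) (hβ1 : β < 1) (hg : Continuous g) (t : ℝ) :
    ∫ u in Ioi 0, ∫ s in Ioo 0 t, (Ioi (t - s)).indicator (fun u => u ^ (-β - 1)) u • g s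
      = ∫ s in Ioo 0 t, ((t - s) ^ (-β) / β) • g s := by
  have hK {s : ℝ} (hs : s ∈ Ioo 0 t) :
      ∫ u in Ioi 0, (Ioi (t - s)).indicator (fun u => u ^ (-β - 1)) u = (t - s) ^ (-β) / β :=
    integral_indicator_Ioi_rpow hβ (sub_pos.2 hs.2)
  have hKm : Measurable (Function.uncurry fun u s : ℝ =>
      (Ioi (t - s)).indicator (fun u => u ^ (-β - 1)) u) :=
    (measurable_fst.pow_const (-β - 1)).indicator
      (measurableSet_lt (measurable_const.sub measurable_snd) measurable_fst)
  have hint : IntegrableOn (fun s => ((t - s) ^ (-β) / β) • g s) (Ioo 0 t) := by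
    refine IntegrableOn.congr_fun (((integrableOn_rlKernel_smul (sub_pos.2 hβ1) hg t).mono_set
      Ioo_subset_Ioi_self).smul (Gamma (1 - β) / β)) (fun s hs => ?_) measurableSet_Ioo
    have := (Gamma_pos_of_pos (sub_pos.2 hβ1)).ne'
    simp only [Pi.smul_apply, rlKernel_of_pos _ (sub_pos.2 hs.2), smul_smul, sub_sub_cancel_left]
    field_simp
  rw [integral_integral_smul_of_nonneg hKm ?_ ?_ hg.aestronglyMeasurable
    (hint.congr_fun (fun s hs => by rw [hK hs]) measurableSet_Ioo)]
  · exact setIntegral_congr_fun measurableSet_Ioo fun s hs => by rw [hK hs]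
  · refine .of_forall fun s => ?_
    filter_upwards [ae_restrict_mem measurableSet_Ioi] with u hu
    exact indicator_apply_nonneg fun _ => rpow_nonneg (le_of_lt hu) _
  · filter_upwards [ae_restrict_mem measurableSet_Ioo] with s hs
    refine Integrable.of_integral_ne_zero ?_
    rw [hK hs]
    have := rpow_pos_of_pos (sub_pos.2 hs.2) (-β)
    positivity

section FractionalCalculus

variable {C β δ : ℝ≥0} {g : ℝ → E}

theorem integrable_uncurry_marchaud (hβ : 0 < β) (hδ : 0 < δ) (hg : HolderWith C (β + δ) g)
    (hg0 : ∀ x ≤ 0, g x = 0) {t : ℝ} (ht : 0 < t) :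
    Integrable (Function.uncurry fun r u : ℝ => u ^ (-β - 1 : ℝ) • (g r - g (r - u)))
      ((volume.restrict (Ioc 0 t)).prod (volume.restrict (Ioi 0))) := by
  have hgc : Continuous g := hg.continuous (by positivity)
  have hdom : IntegrableOn (fun u => C * (u ^ (-β - 1 : ℝ) * min u t ^ (β + δ : ℝ))) (Ioi 0) :=
    (integrableOn_rpow_mul_min_rpow hβ hδ ht).const_mul _
  refine (hdom.comp_snd (volume.restrict (Ioc 0 t))).mono' ?_ ?_
  · exact (measurable_snd.pow_const _).aestronglyMeasurable.smul
      (Continuous.aestronglyMeasurable (by fun_prop))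
  · rw [Measure.prod_restrict]
    filter_upwards [ae_restrict_mem (measurableSet_Ioc.prod measurableSet_Ioi)] with p hp
    exact norm_rpow_smul_le_of_norm_le (φ := fun u => g p.1 - g (p.1 - u)) hp.2
      (norm_sub_comp_sub_le hg hg0 (le_of_lt hp.2) ht.le hp.1.2)

theorem rlIntegral_one_marchaudDeriv [CompleteSpace E] (hβ : 0 < β) (hβ1 : β < 1) (hδ : 0 < δ)
    (hg : HolderWith C (β + δ) g) (hg0 : ∀ x ≤ 0, g x = 0) :
    rlIntegral 1 (marchaudDeriv β g) = rlIntegral (1 - β) g := by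
  have hgc : Continuous g := hg.continuous (by positivity)
  ext t
  rcases le_or_gt t 0 with ht | ht
  · rw [rlIntegral_of_nonpos _ _ ht, rlIntegral_of_nonpos _ _ ht]
  have hinner {u : ℝ} (hu : u ∈ Ioi 0) :
      ∫ r in Ioc 0 t, u ^ (-β - 1 : ℝ) • (g r - g (r - u))
        = ∫ s in Ioo 0 t, (Ioi (t - s)).indicator (fun u => u ^ (-β - 1 : ℝ)) u • g s := by
    rw [integral_smul, integral_Ioc_sub_comp_sub hgc hg0 ht.le (le_of_lt hu), ← integral_smul]
    congr! 2 with s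
    simp only [indicator_apply, mem_Ioi, sub_lt_comm]
    split_ifs <;> simp
  calc rlIntegral 1 (marchaudDeriv β g) t
      = (β / Gamma (1 - β)) •
          ∫ r in Ioc 0 t, ∫ u in Ioi 0, u ^ (-β - 1 : ℝ) • (g r - g (r - u)) := by
        rw [rlIntegral_one, ← integral_smul]
        rfl
    _ = (β / Gamma (1 - β)) • ∫ s in Ioo 0 t, ((t - s) ^ (-β : ℝ) / β) • g s := by
        rw [integral_integral_swap (integrable_uncurry_marchaud hβ hδ hg hg0 ht),
          setIntegral_congr_fun measurableSet_Ioi fun u hu => hinner hu,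
          integral_integral_indicator_rpow_smul (NNReal.coe_pos.2 hβ) (NNReal.coe_lt_one.2 hβ1) hgc]
    _ = (Gamma (1 - β))⁻¹ • ∫ s in Ioc 0 t, (t - s) ^ (1 - β - 1 : ℝ) • g s := by
        rw [integral_Ioc_eq_integral_Ioo, ← integral_smul, ← integral_smul]
        congr! 2 with s
        rw [smul_smul, smul_smul]
        congr 1
        have : (β : ℝ) ≠ 0 := by positivity
        ring_nf
        field
    _ = rlIntegral (1 - β) g t := (rlIntegral_eq_smul_integral_Ioc _ _ _).symm

theorem rlIntegral_one_add_marchaudDeriv [CompleteSpace E] (hβ : 0 < β) (hβ1 : β < 1) (hδ : 0 < δ)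
    (hg : HolderWith C (β + δ) g) (hg0 : ∀ x ≤ 0, g x = 0) (t : ℝ) :
    rlIntegral (β + 1) (marchaudDeriv β g) t = rlIntegral 1 g t := by
  have hβ' : (0 : ℝ) < β := hβ
  have hβ1' : (0 : ℝ) < 1 - β := sub_pos.2 hβ1
  have hgc : Continuous g := hg.continuous (by positivity)
  have hmc : Continuous (marchaudDeriv β g) := by
    obtain ⟨C', hC'⟩ := memHolder_marchaudDeriv hβ hδ hg hg0
    exact hC'.continuous hδ
  rw [← rlIntegral_rlIntegral hβ' one_pos hmc.aestronglyMeasurable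
      (integrableOn_rlKernel_smul (by positivity) hmc t),
    rlIntegral_one_marchaudDeriv hβ hβ1 hδ hg hg0,
    rlIntegral_rlIntegral hβ' hβ1' hgc.aestronglyMeasurable
      (integrableOn_rlKernel_smul (by linarith) hgc t), add_sub_cancel]

end FractionalCalculus

theorem exists_memHolder_fractional_density [CompleteSpace E] {C β δ : ℝ≥0} {T : ℝ} {ξ : ℝ → E}
    (hT : 0 ≤ T) (hβ : 0 < β) (hδ : 0 < δ) (hβδ : β + (β + δ) ≤ 1)
    (hξ : HolderOnWith C (β + (β + δ)) ξ (Icc 0 T)) (hξ0 : ξ 0 = 0) :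
    ∃ D : ℝ → E, MemHolder δ D ∧
      (∀ t ≤ T, ∫ s in Ioc 0 t, ((t - s) ^ (-β : ℝ) * s ^ (-β : ℝ)) • ξ s
        = Gamma (1 - β) • ∫ s in Ioc 0 t, D s) ∧
      ∀ t ≤ T, ∫ s in Ioc 0 t, s ^ (-β : ℝ) • ξ s
        = (Gamma (β + 1))⁻¹ • ∫ s in Ioc 0 t, (t - s) ^ (β : ℝ) • D s := by
  have hβ1 : β < 1 := by
    have : β < β + (β + δ) := lt_add_of_pos_right _ (by positivity)
    exact this.trans_le hβδ
  set f : ℝ → E := fun s => s ^ (-β : ℝ) • ξ s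
  set g : ℝ → E := IccExtend hT ((Icc 0 T).domRestrict f)
  have hg : HolderWith (2 * C) (β + δ) g := holderWith_IccExtend hT <|
    holderOnWith_rpow_neg_smul hξ (fun s hs => hs.1) (left_mem_Icc.2 hT) hξ0 hβ hβδ
  have hg0 x (hx : x ≤ 0) : g x = 0 := by
    simp [g, f, IccExtend_of_le_left _ _ hx, hξ0]
  have hgf {t : ℝ} (ht : t ≤ T) : EqOn f g (Ioc 0 t) := fun s hs =>
    (IccExtend_of_mem hT ((Icc 0 T).domRestrict f) ⟨hs.1.le, hs.2.trans ht⟩).symm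
  refine ⟨marchaudDeriv β g, memHolder_marchaudDeriv hβ hδ hg hg0, fun t ht => ?_, fun t ht => ?_⟩
  · have hΓ : Gamma (1 - β) ≠ 0 := (Gamma_pos_of_pos (sub_pos.2 hβ1)).ne'
    rw [← rlIntegral_one (marchaudDeriv β g), rlIntegral_one_marchaudDeriv hβ hβ1 hδ hg hg0,
      rlIntegral_eq_smul_integral_Ioc, smul_inv_smul₀ hΓ, sub_sub_cancel_left]
    refine setIntegral_congr_fun measurableSet_Ioc fun s hs => ?_
    simp only [← hgf ht hs, f, smul_smul]
  · rw [setIntegral_congr_fun measurableSet_Ioc (hgf ht), ← rlIntegral_one,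
      ← rlIntegral_one_add_marchaudDeriv hβ hβ1 hδ hg hg0, rlIntegral_eq_smul_integral_Ioc,
      add_sub_cancel_right]

theorem two_mul_mul_c₁_mul_Gamma {β : ℝ} (hβ : -(1 / 2) < β) (hβ1 : β < 1) :
    2 * (β + 1 / 2) * (c₁ (β + 1 / 2) * Gamma (1 - β)) = (Gamma (β + 1))⁻¹ := by
  have hΓ₁ : 0 < Gamma (1 - β) := Gamma_pos_of_pos (by linarith)
  have hΓ₂ : 0 < Gamma (β + 1) := Gamma_pos_of_pos (by linarith)
  have hH : 2 * (β + 1 / 2) ≠ 0 := by linarith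
  rw [c₁, show 3 / 2 - (β + 1 / 2) = 1 - β by ring, add_assoc, add_halves]
  generalize 2 * (β + 1 / 2) = H at hH ⊢
  field

theorem mu_eta_large_hurst_general [CompleteSpace E] {H T α c : ℝ} (hH : 1 / 2 < H) (hT : 0 ≤ T)
    (hα : α ∈ Ioc (2 * H - 1) 1) {ξ : ℝ → E}
    (hξ : ∀ s ∈ Icc 0 T, ∀ t ∈ Icc 0 T, ‖ξ t - ξ s‖ ≤ c * |t - s| ^ α) (hξ0 : ξ 0 = 0) :
    ∃ m : ℝ → E,
      (∃ c' : ℝ, 0 ≤ c' ∧ ∀ s ∈ Icc 0 T, ∀ t ∈ Icc 0 T,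
        ‖m t - m s‖ ≤ c' * |t - s| ^ (α + 1 - 2 * H)) ∧
      (∃ M : ℝ, ∀ t ∈ Icc 0 T, ‖m t‖ ≤ M) ∧
      (∀ t ∈ Icc 0 T, c₁ H • ∫ s in Ioc 0 t, ((t - s) ^ (1 / 2 - H) * s ^ (1 / 2 - H)) • ξ s
        = ∫ s in Ioc 0 t, m s) ∧
      (∀ t ∈ Icc 0 T, ∫ s in Ioc 0 t, s ^ (1 / 2 - H) • ξ s
        = (2 * H) • ∫ s in Ioc 0 t, (t - s) ^ (H - 1 / 2) • m s) := by
  obtain ⟨hαl, hα1⟩ := hα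
  lift H - 1 / 2 to ℝ≥0 using by linarith with β hβH
  lift α + 1 - 2 * H to ℝ≥0 using by linarith with δ hδα
  obtain rfl : H = β + 1 / 2 := by linarith
  obtain rfl : α = β + (β + δ) := by linarith
  have hβ : 0 < β := NNReal.coe_pos.1 (by linarith)
  have hδ : 0 < δ := NNReal.coe_pos.1 (by linarith)
  have hξC : HolderOnWith c.toNNReal (β + (β + δ)) ξ (Icc 0 T) :=
    holderOnWith_of_dist_le fun s hs t ht => by
      rw [dist_eq_norm]
      refine (hξ t ht s hs).trans ?_
      push_cast
      exact mul_le_mul_of_nonneg_right (le_max_left c 0) (rpow_nonneg (abs_nonneg _) _)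
  obtain ⟨D, hD, hDμ, hDη⟩ :=
    exists_memHolder_fractional_density hT hβ hδ (by exact_mod_cast hα1) hξC hξ0
  set k : ℝ := c₁ (β + 1 / 2) * Gamma (1 - β)
  obtain ⟨C, hC⟩ := hD.smul (c := k)
  refine ⟨k • D, ⟨C, C.2, fun s _ t _ => ?_⟩,
    isCompact_Icc.exists_bound_of_continuousOn (hC.continuous hδ).continuousOn,
    fun t ht => ?_, fun t ht => ?_⟩
  · rw [← dist_eq_norm, ← Real.dist_eq]
    exact hC.dist_le t s
  · simp only [Pi.smul_apply, integral_smul, sub_add_cancel_right, hDμ t ht.2, smul_smul, k]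
  · simp only [Pi.smul_apply, smul_comm _ k (D _), integral_smul, sub_add_cancel_right, hDη t ht.2]
    rw [smul_smul, two_mul_mul_c₁_mul_Gamma (by linarith) (by linarith)]

theorem mu_eta_large_hurst
    (H T : ℝ) (hH : H ∈ Set.Ioo (1 / 2 : ℝ) 1) (hT : 0 < T)
    (ξ : ℝ → ℝ) (α : ℝ) (hα : α ∈ Set.Ioc (2 * H - 1) 1)
    (c : ℝ) (hc : 0 ≤ c)
    (hξHolder : ∀ s ∈ Set.Icc (0 : ℝ) T, ∀ t ∈ Set.Icc (0 : ℝ) T,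
      |ξ t - ξ s| ≤ c * |t - s| ^ α)
    (hξ0 : ξ 0 = 0) :
    ∃ m : ℝ → ℝ,
      (∃ c' : ℝ, 0 ≤ c' ∧ ∀ s ∈ Set.Icc (0 : ℝ) T, ∀ t ∈ Set.Icc (0 : ℝ) T,
        |m t - m s| ≤ c' * |t - s| ^ (α + 1 - 2 * H)) ∧
      (∃ M : ℝ, ∀ t ∈ Set.Icc (0 : ℝ) T, |m t| ≤ M) ∧
      (∀ t ∈ Set.Icc (0 : ℝ) T, μfn H ξ t = ∫ s in Set.Ioc (0 : ℝ) t, m s) ∧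
      (∀ t ∈ Set.Icc (0 : ℝ) T,
        η H ξ t = 2 * H * ∫ s in Set.Ioc (0 : ℝ) t, (t - s) ^ (H - 1 / 2) * m s) := by
  simpa only [μfn, η, smul_eq_mul, norm_eq_abs] using
    mu_eta_large_hurst_general hH.1 hT.le hα hξHolder hξ0
end
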